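/- Let D^k(H)^-_0 := { X ∈ D^k(H)^- : the spectral radius of X_i is strictly less than 1 for every i }. Then d_P is a metric on D^k(H)^-_0 (in particular d_P(A,B) < ∞ for all A, B in this set), and it is complete: every d_P-Cauchy sequence in D^k(H)^-_0 converges in d_P to an element of D^k(H)^-_0. -/

import Mathlib

open ContinuousLinearMap

noncomputable section

/-- `ℓ²(ℕ^k; H)`. -/
abbrev L2 (k : ℕ) (H : Type*) [NormedAddCommGroup H] : Type _ :=
  lp (fun _ : Fin k → ℕ => H) 2

variable {k : ℕ} {H : Type*} [NormedAddCommGroup H] [InnerProductSpace ℂ H] [CompleteSpace H]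

/-- The Loewner (operator) order: `S ≤ T` iff `T - S` is a positive operator. -/
def opLE {E : Type*} [NormedAddCommGroup E] [InnerProductSpace ℂ E] [CompleteSpace E]
    (S T : E →L[ℂ] E) : Prop := (T - S).IsPositive

/-- The defect operator `Δ_X(I) = (id - Φ_{X_1}) ∘ ⋯ ∘ (id - Φ_{X_k})(I)`,
where `Φ_{X_i}(Y) = X_i Y X_i*`. -/
def defect (X : Fin k → (H →L[ℂ] H)) : H →L[ℂ] H :=
  ((List.ofFn fun i => fun Y : H →L[ℂ] H => Y - X i * Y * adjoint (X i)).foldr (· ∘ ·) id) 1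

/-- Membership in the regular polydisk `D^k(H)`: pairwise commuting operators of norm `< 1`
with positive invertible defect operator. -/
def memPolydisk (X : Fin k → (H →L[ℂ] H)) : Prop :=
  (∀ i j, Commute (X i) (X j)) ∧ (∀ i, ‖X i‖ < 1) ∧
    (defect X).IsPositive ∧ IsUnit (defect X)

/-- Membership in the closed regular polydisk `D^k(H)⁻`: pairwise commuting contractions `X`
with `rX ∈ D^k(H)` for all `r ∈ (0,1)`. -/
def memClosedPolydisk (X : Fin k → (H →L[ℂ] H)) : Prop :=
  (∀ i j, Commute (X i) (X j)) ∧ (∀ i, ‖X i‖ ≤ 1) ∧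
    ∀ r ∈ Set.Ioo (0 : ℝ) 1, memPolydisk (fun i => ((r : ℂ) • X i))

/-- `P` is the pluriharmonic Poisson kernel `𝒫(R, rX)` on `ℓ²(ℕ^k; H)`: it is characterized by
`⟨𝒫(R,rX)(δ_β h), δ_α ℓ⟩ = r^{Σ|α_i - β_i|} ⟨(∏ X_i^{(β_i-α_i)⁺})(∏ (X_i*)^{(α_i-β_i)⁺}) h, ℓ⟩`. -/
def IsPoissonKernel (X : Fin k → (H →L[ℂ] H)) (r : ℝ)
    (P : L2 k H →L[ℂ] L2 k H) : Prop :=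
  ∀ (α β : Fin k → ℕ) (h ℓ : H),
    inner (𝕜 := ℂ) (P (lp.single 2 β h)) (lp.single 2 α ℓ) =
      ((r ^ (∑ i, ((α i - β i) + (β i - α i))) : ℝ) : ℂ) *
        inner (𝕜 := ℂ)
          (((List.ofFn fun i => X i ^ (β i - α i)).prod *
            (List.ofFn fun i => (adjoint (X i)) ^ (α i - β i)).prod) h) ℓ

/-- The two-sided Harnack-type domination `c⁻² 𝒫(R,rB) ≤ 𝒫(R,rA) ≤ c² 𝒫(R,rB)` for all
`r ∈ [0,1)`, expressed in terms of the Poisson kernel families. -/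
def PoissonSandwich (PA PB : ℝ → (L2 k H →L[ℂ] L2 k H)) (c : ℝ) : Prop :=
  ∀ r ∈ Set.Ico (0 : ℝ) 1,
    opLE (((c : ℂ) ^ 2)⁻¹ • PB r) (PA r) ∧ opLE (PA r) (((c : ℂ) ^ 2) • PB r)

/-- Poisson equivalence of two points, expressed via their Poisson kernel families. -/
def PoissonEquiv (PA PB : ℝ → (L2 k H →L[ℂ] L2 k H)) : Prop :=
  ∃ c : ℝ, 1 ≤ c ∧ PoissonSandwich PA PB c

/-- The Poisson distance `δ_P`, expressed via the Poisson kernel families. -/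
def deltaP (PA PB : ℝ → (L2 k H →L[ℂ] L2 k H)) : ℝ :=
  Real.log (sInf {c : ℝ | 1 ≤ c ∧ PoissonSandwich PA PB c})


open scoped ENNReal

/-- Membership in `D^k(H)⁻₀`: elements of the closed regular polydisk all of whose entries
have spectral radius strictly less than `1`. -/
def memD0 (X : Fin k → (H →L[ℂ] H)) : Prop :=
  memClosedPolydisk X ∧ ∀ i, spectralRadius ℂ (X i) < 1

/-- `d_P(A,B) = sup_{r ∈ [0,1)} ‖𝒫(R,rA) - 𝒫(R,rB)‖`, computed in `ℝ≥0∞` from the Poisson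
kernel families. -/
def dPfam (PA PB : ℝ → (L2 k H →L[ℂ] L2 k H)) : ℝ≥0∞ :=
  ⨆ r ∈ Set.Ico (0 : ℝ) 1, (‖PA r - PB r‖₊ : ℝ≥0∞)

open Filter Topology

set_option linter.unusedSectionVars false

section defectlemmas
variable {A : Type*} [CStarAlgebra A] [PartialOrder A] [StarOrderedRing A]

def phiStep (X Y : A) : A := Y - X * Y * star X

def Dl (L : List A) (Q : A) : A := L.foldr phiStep Q

lemma nonneg_of_step {X Y : A} (hX : ‖X‖ < 1) (h : 0 ≤ phiStep X Y) : 0 ≤ Y := by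
  have h1 : X * Y * star X ≤ Y := sub_nonneg.1 h
  have h2 : ∀ n : ℕ, X ^ n * Y * star (X ^ n) ≤ Y := by
    intro n
    induction n with
    | zero => simp
    | succ n ih =>
      have := star_right_conjugate_le_conjugate ih X
      refine le_trans (le_of_eq ?_) (this.trans h1)
      rw [pow_succ', star_mul]; simp only [mul_assoc]
  have h3 : Tendsto (fun n : ℕ => X ^ n * Y * star (X ^ n)) atTop (𝓝 0) := by
    have h4 : Tendsto (fun n : ℕ => X ^ n) atTop (𝓝 0) := tendsto_pow_atTop_nhds_zero_of_norm_lt_one hX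
    have := (h4.mul_const Y).mul h4.star
    simpa using this
  exact le_of_tendsto h3 (Eventually.of_forall h2)

lemma Dl_step (L : List A) (X Q : A) (hc : ∀ Y ∈ L, Commute X Y) :
    Dl L (phiStep X Q) = phiStep X (Dl L Q) := by
  induction L with
  | nil => rfl
  | cons Z L ih =>
    have ih' := ih (fun Y hY => hc Y (List.mem_cons_of_mem _ hY))
    have hz : X * Z = Z * X := hc Z (List.mem_cons_self)
    have hz' : star Z * star X = star X * star Z := by rw [← star_mul, ← star_mul, hz]
    simp only [Dl, List.foldr_cons] at ih' ⊢
    rw [ih']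
    simp only [phiStep, mul_sub, sub_mul]
    have : Z * (X * List.foldr phiStep Q L * star X) * star Z
      = X * (Z * List.foldr phiStep Q L * star Z) * star X := by
      calc _ = (Z * X) * List.foldr phiStep Q L * (star X * star Z) := by simp only [mul_assoc]
        _ = _ := by rw [← hz, ← hz']; simp only [mul_assoc]
    rw [this]; abel

lemma Dl_lin (L : List A) (a b : ℝ) (Y Z : A) : Dl L (a • Y + b • Z) = a • Dl L Y + b • Dl L Z := by
  induction L with
  | nil => rfl
  | cons X L ih =>
    simp only [Dl, List.foldr_cons] at ih ⊢
    rw [ih]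
    simp only [phiStep, mul_add, add_mul, smul_sub, mul_smul_comm, smul_mul_assoc]
    abel

lemma step_smul (t : ℝ) (X Q : A) :
    phiStep ((t : ℂ) • X) Q = (t ^ 2) • phiStep X Q + (1 - t ^ 2) • Q := by
  have : ((t : ℂ) • X) = t • X := by simp
  rw [this]
  simp only [phiStep, star_smul, smul_mul_assoc, mul_smul_comm, smul_smul, star_trivial, smul_sub, sub_smul, one_smul, pow_two]
  abel

lemma Dl_nonneg {L : List A} (hn : ∀ X ∈ L, ‖X‖ < 1) {Q : A} (h : 0 ≤ Dl L Q) : 0 ≤ Q := by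
  induction L with
  | nil => exact h
  | cons X L ih =>
    exact ih (fun Y hY => hn Y (List.mem_cons_of_mem _ hY))
      (nonneg_of_step (hn X List.mem_cons_self) h)

lemma Dl_lower {t : ℝ} (ht : 0 ≤ t) (ht1 : t ≤ 1) {L : List A} (hn : ∀ X ∈ L, ‖X‖ < 1)
    (hc : ∀ X ∈ L, ∀ Y ∈ L, Commute X Y) {Q : A} (h : 0 ≤ Dl L Q) :
    ((1 - t ^ 2) ^ L.length) • Q ≤ Dl (L.map (fun X => (t : ℂ) • X)) Q := by
  induction L generalizing Q with
  | nil => simp [Dl]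
  | cons X L ih =>
    have hn' := (fun Y hY => hn Y (List.mem_cons_of_mem X hY))
    have hc' : ∀ X ∈ L, ∀ Y ∈ L, Commute X Y := fun Y hY Z hZ =>
      hc Y (List.mem_cons_of_mem X hY) Z (List.mem_cons_of_mem X hZ)
    have hX : ∀ Y ∈ L, Commute X Y := fun Y hY => hc X List.mem_cons_self Y (List.mem_cons_of_mem X hY)
    have h1 : 0 ≤ phiStep X (Dl L Q) := h
    have h2 : 0 ≤ Dl L Q := nonneg_of_step (hn X List.mem_cons_self) h1
    have h3 : 0 ≤ Dl L (phiStep X Q) := by rwa [Dl_step L X Q hX]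
    have h4 := ih hn' hc' h2
    have h5 := ih hn' hc' h3
    have h6 : 0 ≤ phiStep X Q := Dl_nonneg hn' h3
    have ht2 : 0 ≤ 1 - t ^ 2 := by nlinarith
    have e : Dl ((X :: L).map (fun X => (t : ℂ) • X)) Q
        = (t ^ 2) • Dl (L.map (fun X => (t : ℂ) • X)) (phiStep X Q)
          + (1 - t ^ 2) • Dl (L.map (fun X => (t : ℂ) • X)) Q := by
      rw [← Dl_lin, ← step_smul, Dl_step]
      · rfl
      · intro Y hY
        obtain ⟨Z, hZ, rfl⟩ := List.mem_map.1 hY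
        exact ((hX Z hZ).smul_left _).smul_right _
    rw [e, List.length_cons, pow_succ', mul_smul]
    have h7 : 0 ≤ Dl (L.map (fun X => (t : ℂ) • X)) (phiStep X Q) :=
      le_trans (smul_nonneg (pow_nonneg ht2 _) h6) h5
    have h8 := smul_le_smul_of_nonneg_left h4 ht2
    exact h8.trans (le_add_of_nonneg_left (smul_nonneg (sq_nonneg t) h7))

end defectlemmas

lemma sum_toeplitz {w : ℕ → ℝ} (hw : ∀ n, 0 ≤ w n) (hs : Summable w) (a N : ℕ) :
    ∑ b ∈ Finset.range N, w ((a - b) + (b - a)) ≤ 2 * ∑' n, w n := by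
  have key : ∀ a N : ℕ, ∑ b ∈ Finset.range N, w ((a - b) + (b - a))
      ≤ (∑ j ∈ Finset.range (a + 1), w j) + ∑' n, w n := by
    intro a
    induction a with
    | zero =>
      intro N
      have := hs.sum_le_tsum (Finset.range N) (fun i _ => hw i)
      simp
      linarith [hw 0]
    | succ a ih =>
      intro N
      cases N with
      | zero => simpa using add_nonneg (Finset.sum_nonneg fun i _ => hw i) (tsum_nonneg hw)
      | succ N =>
        rw [Finset.sum_range_succ', Finset.sum_range_succ _ (a + 1)]
        have := ih N
        simp only [Nat.add_sub_add_right] 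
        simp only [Nat.sub_zero, Nat.zero_sub, add_zero]
        linarith
  have := hs.sum_le_tsum (Finset.range (a + 1)) (fun i _ => hw i)
  linarith [key a N]

lemma sum_toeplitz_pi {k : ℕ} {w : Fin k → ℕ → ℝ} (hw : ∀ i n, 0 ≤ w i n) (hs : ∀ i, Summable (w i))
    (α : Fin k → ℕ) (s : Finset (Fin k → ℕ)) :
    ∑ β ∈ s, ∏ i, w i ((α i - β i) + (β i - α i)) ≤ ∏ i, (2 * ∑' n, w i n) := by
  obtain ⟨N, hN⟩ : ∃ N : ℕ, ∀ β ∈ s, ∀ i, β i < N := by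
    refine ⟨s.sup (fun β => Finset.univ.sup β) + 1, fun β hβ i => ?_⟩
    have h1 : β i ≤ Finset.univ.sup β := Finset.le_sup (Finset.mem_univ i)
    have h2 : Finset.univ.sup β ≤ s.sup (fun β => Finset.univ.sup β) :=
      Finset.le_sup (f := fun β : Fin k → ℕ => Finset.univ.sup β) hβ
    omega
  calc _ ≤ ∑ β ∈ Fintype.piFinset (fun _ : Fin k => Finset.range N),
        ∏ i, w i ((α i - β i) + (β i - α i)) := by
        refine Finset.sum_le_sum_of_subset_of_nonneg (fun β hβ => ?_)
          (fun _ _ _ => Finset.prod_nonneg fun i _ => hw i _)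
        simpa [Fintype.mem_piFinset] using hN β hβ
    _ = ∏ i, ∑ b ∈ Finset.range N, w i ((α i - b) + (b - α i)) := by
        rw [Finset.prod_univ_sum]
    _ ≤ _ := Finset.prod_le_prod (fun i _ => Finset.sum_nonneg fun _ _ => hw i _)
        (fun i _ => sum_toeplitz (hw i) (hs i) _ _)


lemma norm_one_op : ‖(1 : H →L[ℂ] H)‖ ≤ 1 := ContinuousLinearMap.norm_id_le

lemma norm_ofFn_prod {k : ℕ} (f : Fin k → (H →L[ℂ] H)) : ‖(List.ofFn f).prod‖ ≤ ∏ i, ‖f i‖ := by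
  induction k with
  | zero => simpa using norm_one_op
  | succ k ih =>
    rw [List.ofFn_succ, List.prod_cons, Fin.prod_univ_succ]
    exact (norm_mul_le _ _).trans (mul_le_mul_of_nonneg_left (ih _) (norm_nonneg _))

lemma norm_adj_pow (X : H →L[ℂ] H) (n : ℕ) : ‖(adjoint X) ^ n‖ = ‖X ^ n‖ := by
  rw [← star_eq_adjoint, ← star_pow, norm_star]

lemma entry_bound (X : Fin k → (H →L[ℂ] H)) (α β : Fin k → ℕ) :
    ‖(List.ofFn fun i => X i ^ (β i - α i)).prod *
            (List.ofFn fun i => (adjoint (X i)) ^ (α i - β i)).prod‖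
      ≤ ∏ i, ‖X i ^ ((α i - β i) + (β i - α i))‖ := by
  refine (norm_mul_le _ _).trans ?_
  refine (mul_le_mul (norm_ofFn_prod _) (norm_ofFn_prod _) (norm_nonneg _)
    (Finset.prod_nonneg fun _ _ => norm_nonneg _)).trans ?_
  rw [← Finset.prod_mul_distrib]
  refine Finset.prod_le_prod (fun _ _ => by positivity) (fun i _ => ?_)
  rw [norm_adj_pow]
  rcases le_total (α i) (β i) with h | h
  · rw [Nat.sub_eq_zero_of_le h, pow_zero, zero_add]
    exact mul_le_of_le_one_right (norm_nonneg _) norm_one_op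
  · rw [Nat.sub_eq_zero_of_le h, pow_zero, add_zero]
    exact mul_le_of_le_one_left (norm_nonneg _) norm_one_op

lemma summable_pow {X : H →L[ℂ] H} (h : spectralRadius ℂ X < 1) : Summable (fun n : ℕ => ‖X ^ n‖) := by
  obtain ⟨ρ, h1, h2⟩ := ENNReal.lt_iff_exists_nnreal_btwn.1 h
  have hρ : ρ < 1 := by exact_mod_cast h2
  have h3 := (spectrum.pow_nnnorm_pow_one_div_tendsto_nhds_spectralRadius X).eventually_lt_const h1
  refine Summable.of_norm_bounded_eventually_nat (g := fun n => (ρ : ℝ) ^ n)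
    (summable_geometric_of_lt_one ρ.2 (by exact_mod_cast hρ)) ?_
  filter_upwards [h3, eventually_gt_atTop 0] with n hn hn0
  rw [norm_norm]
  have hn0' : (0 : ℝ) < n := by exact_mod_cast hn0
  have h4 := ENNReal.rpow_le_rpow hn.le hn0'.le
  rw [← ENNReal.rpow_mul, one_div, inv_mul_cancel₀ hn0'.ne', ENNReal.rpow_one, ENNReal.rpow_natCast] at h4
  have h5 : ‖X ^ n‖₊ ≤ ρ ^ n := by exact_mod_cast h4
  exact_mod_cast h5

lemma specRad_of_pow {X : H →L[ℂ] H} (n : ℕ) (h : ‖X ^ (n + 1)‖ < 1) : spectralRadius ℂ X < 1 := by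
  refine (spectrum.spectralRadius_le_pow_nnnorm_pow_one_div ℂ X n).trans_lt ?_
  have hp : (0 : ℝ) < 1 / (n + 1) := by positivity
  have h1 : (‖X ^ (n + 1)‖₊ : ENNReal) ^ (1 / (n + 1) : ℝ) < 1 := by
    refine ENNReal.rpow_lt_one ?_ hp
    exact_mod_cast h
  have h2 : (‖(1 : H →L[ℂ] H)‖₊ : ENNReal) ^ (1 / (n + 1) : ℝ) ≤ 1 := by
    refine ENNReal.rpow_le_one ?_ hp.le
    exact_mod_cast (norm_one_op (H := H))
  calc _ ≤ (‖X ^ (n + 1)‖₊ : ENNReal) ^ (1 / (n + 1) : ℝ) * 1 := by gcongr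
    _ < 1 := by simpa using h1

lemma lp_sum_sq_le (f : L2 k H) (s : Finset (Fin k → ℕ)) : ∑ α ∈ s, ‖f α‖ ^ 2 ≤ ‖f‖ ^ 2 := by
  have := lp.sum_rpow_le_norm_rpow (p := 2) (by simp) f s
  simpa using this

lemma schur_form {P : L2 k H →L[ℂ] L2 k H} {c : (Fin k → ℕ) → (Fin k → ℕ) → ℝ} {M : ℝ}
    (hc : ∀ α β, 0 ≤ c α β)
    (hP : ∀ α β (h l : H), ‖inner (𝕜 := ℂ) (P (lp.single 2 β h)) (lp.single 2 α l)‖ ≤ c α β * (‖h‖ * ‖l‖))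
    (h1 : ∀ α (s : Finset (Fin k → ℕ)), ∑ β ∈ s, c α β ≤ M)
    (h2 : ∀ β (s : Finset (Fin k → ℕ)), ∑ α ∈ s, c α β ≤ M) (f g : L2 k H) :
    ‖inner (𝕜 := ℂ) (P f) g‖ ≤ M / 2 * (‖f‖ ^ 2 + ‖g‖ ^ 2) := by
  have hM : 0 ≤ M := by simpa using h1 0 ∅
  have hf : Tendsto (fun s : Finset (Fin k → ℕ) => ∑ β ∈ s, lp.single 2 β (f β)) atTop (𝓝 f) :=
    lp.hasSum_single (by simp) f
  have hg : Tendsto (fun s : Finset (Fin k → ℕ) => ∑ β ∈ s, lp.single 2 β (g β)) atTop (𝓝 g) :=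
    lp.hasSum_single (by simp) g
  have ht := (((P.continuous.tendsto f).comp hf).inner hg (𝕜 := ℂ)).norm
  refine le_of_tendsto ht (Eventually.of_forall fun s => ?_)
  simp only [Function.comp_apply, map_sum, sum_inner, inner_sum]
  rw [Finset.sum_comm]
  calc _ ≤ ∑ β ∈ s, ∑ α ∈ s, c α β * (‖f β‖ * ‖g α‖) := by
        refine (norm_sum_le _ _).trans (Finset.sum_le_sum fun β _ => ?_)
        exact (norm_sum_le _ _).trans (Finset.sum_le_sum fun α _ => hP _ _ _ _)
    _ ≤ ∑ β ∈ s, ∑ α ∈ s, (‖f β‖ ^ 2 / 2 * c α β + ‖g α‖ ^ 2 / 2 * c α β) := by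
        refine Finset.sum_le_sum fun β _ => Finset.sum_le_sum fun α _ => ?_
        have := hc α β
        nlinarith [mul_nonneg this (sq_nonneg (‖f β‖ - ‖g α‖))]
    _ = ∑ β ∈ s, ‖f β‖ ^ 2 / 2 * ∑ α ∈ s, c α β + ∑ α ∈ s, ‖g α‖ ^ 2 / 2 * ∑ β ∈ s, c α β := by
        simp only [Finset.sum_add_distrib, Finset.mul_sum]
        congr 1
        exact Finset.sum_comm
    _ ≤ ∑ β ∈ s, ‖f β‖ ^ 2 / 2 * M + ∑ α ∈ s, ‖g α‖ ^ 2 / 2 * M := by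
        gcongr
        · exact h2 _ _
        · exact h1 _ _
    _ = M / 2 * (∑ β ∈ s, ‖f β‖ ^ 2 + ∑ β ∈ s, ‖g β‖ ^ 2) := by
        rw [← Finset.sum_mul, ← Finset.sum_mul, ← Finset.sum_div, ← Finset.sum_div]; ring
    _ ≤ _ := by
        gcongr
        · exact lp_sum_sq_le f s
        · exact lp_sum_sq_le g s

lemma schur_norm {P : L2 k H →L[ℂ] L2 k H} {c : (Fin k → ℕ) → (Fin k → ℕ) → ℝ} {M : ℝ}
    (hc : ∀ α β, 0 ≤ c α β)
    (hP : ∀ α β (h l : H), ‖inner (𝕜 := ℂ) (P (lp.single 2 β h)) (lp.single 2 α l)‖ ≤ c α β * (‖h‖ * ‖l‖))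
    (h1 : ∀ α (s : Finset (Fin k → ℕ)), ∑ β ∈ s, c α β ≤ M)
    (h2 : ∀ β (s : Finset (Fin k → ℕ)), ∑ α ∈ s, c α β ≤ M) : ‖P‖ ≤ M := by
  have hM : 0 ≤ M := by simpa using h1 0 ∅
  refine P.opNorm_le_bound hM fun f => ?_
  rcases eq_or_ne (P f) 0 with h0 | h0
  · rw [h0, norm_zero]; positivity
  have hp : 0 < ‖P f‖ := norm_pos_iff.2 h0
  have hf : 0 < ‖f‖ := norm_pos_iff.2 fun h => h0 (by rw [h, map_zero])
  have := schur_form hc hP h1 h2 f (((‖f‖ / ‖P f‖ : ℝ) : ℂ) • P f)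
  rw [inner_smul_right, norm_mul, norm_smul, inner_self_eq_norm_sq_to_K, Complex.norm_real,
    Real.norm_of_nonneg (by positivity), div_mul_cancel₀ _ hp.ne'] at this
  simp only [norm_pow, Complex.coe_algebraMap, Complex.norm_real, norm_norm] at this
  have e : ‖f‖ / ‖P f‖ * ‖P f‖ ^ 2 = ‖f‖ * ‖P f‖ := by field_simp
  rw [e] at this
  have h3 : ‖f‖ * ‖P f‖ ≤ ‖f‖ * (M * ‖f‖) := by nlinarith
  exact le_of_mul_le_mul_left h3 hf

lemma poisson_bound {A : Fin k → (H →L[ℂ] H)} (hA : memD0 A) {r : ℝ} (hr : r ∈ Set.Ico (0 : ℝ) 1)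
    {P : L2 k H →L[ℂ] L2 k H} (hP : IsPoissonKernel A r P) :
    ‖P‖ ≤ ∏ i, (2 * ∑' n, ‖A i ^ n‖) := by
  have hs : ∀ i, Summable fun n : ℕ => ‖A i ^ n‖ := fun i => summable_pow (hA.2 i)
  refine schur_norm (c := fun α β => ∏ i, ‖A i ^ ((α i - β i) + (β i - α i))‖)
    (fun _ _ => Finset.prod_nonneg fun _ _ => norm_nonneg _) ?_ ?_ ?_
  · intro α β h l
    rw [hP α β h l, norm_mul, Complex.norm_real, Real.norm_of_nonneg (pow_nonneg hr.1 _)]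
    refine (mul_le_of_le_one_left (norm_nonneg _) (pow_le_one₀ hr.1 hr.2.le)).trans ?_
    refine (norm_inner_le_norm _ _).trans ?_
    rw [← mul_assoc]
    refine mul_le_mul_of_nonneg_right ?_ (norm_nonneg _)
    exact (le_opNorm _ _).trans (mul_le_mul_of_nonneg_right (entry_bound A α β) (norm_nonneg _))
  · intro α s
    exact sum_toeplitz_pi (w := fun i n => ‖A i ^ n‖) (fun _ _ => norm_nonneg _) hs α s
  · intro β s
    have := sum_toeplitz_pi (w := fun i n => ‖A i ^ n‖) (fun _ _ => norm_nonneg _) hs β s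
    simpa only [add_comm] using this

lemma kernel_unique {A : Fin k → (H →L[ℂ] H)} {r : ℝ} {P Q : L2 k H →L[ℂ] L2 k H}
    (hP : IsPoissonKernel A r P) (hQ : IsPoissonKernel A r Q) : P = Q := by
  have : ‖P - Q‖ ≤ 0 := by
    refine schur_norm (c := fun _ _ => 0) (fun _ _ => le_rfl) ?_ (by simp) (by simp)
    intro α β h l
    rw [ContinuousLinearMap.sub_apply, inner_sub_left, hP, hQ]; simp
  exact sub_eq_zero.1 (norm_le_zero_iff.1 this)

lemma prod_ofFn_single {k : ℕ} {M : Type*} [Monoid M] (f : Fin k → ℕ → M) (h0 : ∀ j, f j 0 = 1)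
    (i : Fin k) (a : ℕ) :
    (List.ofFn fun j => f j ((Pi.single i a : Fin k → ℕ) j)).prod = f i a := by
  induction k with
  | zero => exact i.elim0
  | succ k ih =>
    rw [List.ofFn_succ, List.prod_cons]
    cases i using Fin.cases with
    | zero =>
      have : (List.ofFn fun j : Fin k => f j.succ ((Pi.single 0 a : Fin (k+1) → ℕ) j.succ)).prod = 1 := by
        apply List.prod_eq_one
        intro x hx
        obtain ⟨j, rfl⟩ := (List.mem_ofFn' _ _).1 hx
        simp [h0]
      rw [this]; simp
    | succ i =>
      have := ih (fun j => f j.succ) (fun j => h0 _) i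
      have e : ∀ j : Fin k, (Pi.single i.succ a : Fin (k+1) → ℕ) j.succ = (Pi.single i a : Fin k → ℕ) j := by
        intro j; simp [Pi.single_apply]
      simp only [e]
      rw [this]; simp [h0]

lemma prod_ofFn_one {k : ℕ} {M : Type*} [Monoid M] (f : Fin k → M) (h0 : ∀ j, f j = 1) :
    (List.ofFn f).prod = 1 := by
  apply List.prod_eq_one
  intro x hx
  obtain ⟨j, rfl⟩ := (List.mem_ofFn' _ _).1 hx
  exact h0 j

/-- row entries -/
lemma kernel_row {A : Fin k → (H →L[ℂ] H)} {r : ℝ} {P : L2 k H →L[ℂ] L2 k H}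
    (hP : IsPoissonKernel A r P) (i : Fin k) (h l : H) :
    inner (𝕜 := ℂ) (P (lp.single 2 (Pi.single i 1) h)) (lp.single 2 0 l)
      = (r : ℂ) * inner (𝕜 := ℂ) (A i h) l := by
  rw [hP]
  have e1 : (List.ofFn fun j => A j ^ ((Pi.single i 1 : Fin k → ℕ) j - (0 : Fin k → ℕ) j)).prod = A i := by
    have := prod_ofFn_single (fun j n => A j ^ n) (fun j => pow_zero _) i 1
    simpa using this
  rw [e1, prod_ofFn_one _ (by simp)]
  simp 

lemma kernel_col {A : Fin k → (H →L[ℂ] H)} {r : ℝ} {P : L2 k H →L[ℂ] L2 k H}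
    (hP : IsPoissonKernel A r P) (i : Fin k) (a : ℕ) (h : H) :
    P (lp.single 2 0 h) (Pi.single i a) = ((r ^ a : ℝ) : ℂ) • ((adjoint (A i)) ^ a) h := by
  refine ext_inner_right ℂ fun l => ?_
  rw [← lp.inner_single_right, hP, inner_smul_left, Complex.conj_ofReal]
  have e1 : (List.ofFn fun j => (adjoint (A j)) ^ ((Pi.single i a : Fin k → ℕ) j - (0 : Fin k → ℕ) j)).prod
      = (adjoint (A i)) ^ a := by
    have := prod_ofFn_single (fun j n => (adjoint (A j)) ^ n) (fun j => pow_zero _) i a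
    simpa using this
  rw [e1, prod_ofFn_one _ (by simp)]
  simp 

lemma entry_diff {A B : Fin k → (H →L[ℂ] H)} {r : ℝ} (hr : 0 ≤ r) {P Q : L2 k H →L[ℂ] L2 k H}
    (hP : IsPoissonKernel A r P) (hQ : IsPoissonKernel B r Q) (i : Fin k) :
    r * ‖A i - B i‖ ≤ ‖P - Q‖ := by
  have : ‖(r : ℂ) • (A i - B i)‖ ≤ ‖P - Q‖ := by
    refine opNorm_le_bound _ (norm_nonneg _) fun h => ?_
    set v := ((r : ℂ) • (A i - B i)) h with hv
    rcases eq_or_ne v 0 with h0 | h0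
    · rw [h0, norm_zero]; positivity
    have h1 : ∀ w, inner (𝕜 := ℂ) v w = inner (𝕜 := ℂ) ((P - Q) (lp.single 2 (Pi.single i 1) h))
        (lp.single 2 0 w : L2 k H) := by
      intro w
      rw [ContinuousLinearMap.sub_apply, inner_sub_left, kernel_row hP, kernel_row hQ]
      rw [hv, ContinuousLinearMap.smul_apply, inner_smul_left, Complex.conj_ofReal,
        ContinuousLinearMap.sub_apply, inner_sub_left]
      ring
    have h2 : ‖v‖ * ‖v‖ ≤ ‖P - Q‖ * ‖h‖ * ‖v‖ := by
      calc ‖v‖ * ‖v‖ = ‖inner (𝕜 := ℂ) v v‖ := by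
            rw [inner_self_eq_norm_sq_to_K]; simp [pow_two]
        _ ≤ _ := by
            rw [h1 v]
            refine (norm_inner_le_norm _ _).trans ?_
            rw [lp.norm_single (by simp)]
            refine mul_le_mul_of_nonneg_right ?_ (norm_nonneg _)
            refine (le_opNorm _ _).trans ?_
            rw [lp.norm_single (by simp)]
    exact le_of_mul_le_mul_right h2 (norm_pos_iff.2 h0)
  rwa [norm_smul, Complex.norm_real, Real.norm_of_nonneg hr] at this

lemma specRad_of_bound {A : Fin k → (H →L[ℂ] H)} (hA : ∀ i, ‖A i‖ ≤ 1)
    {P : ℝ → (L2 k H →L[ℂ] L2 k H)} (hP : ∀ r ∈ Set.Ico (0 : ℝ) 1, IsPoissonKernel A r (P r))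
    {M : ℝ} (hM : ∀ r ∈ Set.Ico (0 : ℝ) 1, ‖P r‖ ≤ M) (i : Fin k) : spectralRadius ℂ (A i) < 1 := by
  have hM0 : 0 ≤ M := (norm_nonneg _).trans (hM 0 (by simp))
  set X := adjoint (A i) with hX
  have hX1 : ‖X‖ ≤ 1 := by rw [hX, LinearIsometryEquiv.norm_map]; exact hA i
  have hmono : ∀ (h : H) (n a : ℕ), a ≤ n → ‖(X ^ n) h‖ ≤ ‖(X ^ a) h‖ := by
    intro h n a han
    induction n, han using Nat.le_induction with
    | base => exact le_rfl
    | succ n _ ih =>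
      rw [pow_succ', ContinuousLinearMap.mul_apply]
      refine (le_opNorm _ _).trans ((mul_le_of_le_one_left (norm_nonneg _) hX1).trans ih)
  have key : ∀ (n : ℕ) (h : H), ((n : ℝ) + 1) * ‖(X ^ n) h‖ ^ 2 ≤ M ^ 2 * ‖h‖ ^ 2 := by
    intro n h
    have h1 : ∀ r ∈ Set.Ico (0 : ℝ) 1, ∑ a ∈ Finset.range (n + 1), (r ^ a * ‖(X ^ a) h‖) ^ 2
        ≤ M ^ 2 * ‖h‖ ^ 2 := by
      intro r hr
      have h2 := lp_sum_sq_le (P r (lp.single 2 0 h)) ((Finset.range (n + 1)).image fun a => Pi.single i a)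
      rw [Finset.sum_image (fun a _ b _ hab => Pi.single_injective i hab)] at h2
      have h3 : ‖P r (lp.single 2 0 h)‖ ≤ M * ‖h‖ := by
        refine (le_opNorm _ _).trans ?_
        rw [lp.norm_single (by simp)]
        exact mul_le_mul_of_nonneg_right (hM r hr) (norm_nonneg _)
      rw [← mul_pow]
      refine le_trans (le_of_eq ?_) (h2.trans (pow_le_pow_left₀ (norm_nonneg _) h3 2))
      refine Finset.sum_congr rfl fun a _ => ?_
      rw [kernel_col (hP r hr), norm_smul, Complex.norm_real, Real.norm_of_nonneg (pow_nonneg hr.1 _)]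
    have h4 : ∑ a ∈ Finset.range (n + 1), ((1 : ℝ) ^ a * ‖(X ^ a) h‖) ^ 2 ≤ M ^ 2 * ‖h‖ ^ 2 := by
      have hc : Continuous fun r : ℝ => ∑ a ∈ Finset.range (n + 1), (r ^ a * ‖(X ^ a) h‖) ^ 2 := by
        fun_prop
      refine le_of_tendsto ((hc.tendsto 1).mono_left (nhdsWithin_le_nhds (s := Set.Iio 1))) ?_
      filter_upwards [Ioo_mem_nhdsLT (show (0 : ℝ) < 1 by norm_num)] with r hr
      exact h1 r ⟨hr.1.le, hr.2⟩
    refine le_trans ?_ h4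
    have h5 : ∑ a ∈ Finset.range (n + 1), ‖(X ^ n) h‖ ^ 2 ≤
        ∑ a ∈ Finset.range (n + 1), ((1 : ℝ) ^ a * ‖(X ^ a) h‖) ^ 2 := by
      refine Finset.sum_le_sum fun a ha => ?_
      rw [one_pow, one_mul]
      exact pow_le_pow_left₀ (norm_nonneg _) (hmono h n a (by simpa [Nat.lt_succ_iff] using ha)) 2
    simpa using h5
  obtain ⟨n, hn⟩ := exists_nat_gt (4 * M ^ 2)
  refine specRad_of_pow n ?_
  rw [← norm_adj_pow]
  refine lt_of_le_of_lt (opNorm_le_bound _ (show (0 : ℝ) ≤ 1 / 2 by norm_num) fun h => ?_)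
    (show (1 / 2 : ℝ) < 1 by norm_num)
  have := key (n + 1) h
  refine le_of_sq_le_sq ?_ (by positivity)
  rw [Nat.cast_succ] at this
  have h6 : 4 * M ^ 2 * ‖h‖ ^ 2 ≤ (n + 1 + 1) * ‖h‖ ^ 2 := by
    refine mul_le_mul_of_nonneg_right (by linarith) (sq_nonneg _)
  have h7 : ((n : ℝ) + 1 + 1) * ‖(X ^ (n + 1)) h‖ ^ 2 ≤ ((n : ℝ) + 1 + 1) * (1 / 2 * ‖h‖) ^ 2 := by
    nlinarith
  exact le_of_mul_le_mul_left h7 (by positivity)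

lemma defect_eq (X : Fin k → (H →L[ℂ] H)) : defect X = Dl (List.ofFn X) 1 := by
  have : ∀ (L : List (H →L[ℂ] H)) (Q : H →L[ℂ] H),
      ((L.map phiStep).foldr (· ∘ ·) id) Q = Dl L Q := by
    intro L Q
    induction L with
    | nil => rfl
    | cons X L ih => simp only [List.map_cons, List.foldr_cons, Function.comp_apply, ih]; rfl
  rw [← this, List.map_ofFn]
  rfl

lemma defect_tendsto {X : ℕ → Fin k → (H →L[ℂ] H)} {T : Fin k → (H →L[ℂ] H)}
    (h : ∀ i, Tendsto (fun m => X m i) atTop (𝓝 (T i))) :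
    Tendsto (fun m => defect (X m)) atTop (𝓝 (defect T)) := by
  simp only [defect_eq]
  induction k with
  | zero => simp [Dl]
  | succ k ih =>
    have := ih (X := fun m i => X m i.succ) (T := fun i => T i.succ) (fun i => h i.succ)
    simp only [List.ofFn_succ]
    exact this.sub (((h 0).mul this).mul (h 0).star)

lemma defect_unit {T : Fin k → (H →L[ℂ] H)} (hc : ∀ i j, Commute (T i) (T j)) (hn : ∀ i, ‖T i‖ ≤ 1)
    (hd : ∀ s ∈ Set.Ioo (0 : ℝ) 1, (defect (fun i => (s : ℂ) • T i)).IsPositive) {r : ℝ}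
    (hr : r ∈ Set.Ioo (0 : ℝ) 1) : IsUnit (defect (fun i => (r : ℂ) • T i)) := by
  obtain ⟨s, hrs, hs1⟩ := exists_between hr.2
  have hs0 : 0 < s := hr.1.trans hrs
  have h1 := hd s ⟨hs0, hs1⟩
  rw [← nonneg_iff_isPositive, defect_eq] at h1
  have ht0 : 0 ≤ r / s := by have := hr.1; positivity
  have ht1 : r / s < 1 := (div_lt_one hs0).2 hrs
  have h2 := Dl_lower ht0 ht1.le ?_ ?_ h1
  · rw [List.map_ofFn] at h2
    have e : ((fun X : H →L[ℂ] H => ((r / s : ℝ) : ℂ) • X) ∘ fun i => (s : ℂ) • T i)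
        = fun i => (r : ℂ) • T i := by
      funext i
      simp only [Function.comp_apply, smul_smul]
      congr 1
      rw [← Complex.ofReal_mul, div_mul_cancel₀ _ hs0.ne']
    rw [e, ← defect_eq] at h2
    have hp : 0 < (1 - (r / s) ^ 2) ^ (List.ofFn fun i => (s : ℂ) • T i).length := by
      apply pow_pos; nlinarith
    refine CStarAlgebra.isUnit_of_le _ h2 ?_
    refine ⟨smul_nonneg hp.le zero_le_one, ?_⟩
    rw [← Algebra.algebraMap_eq_smul_one]
    exact (IsUnit.mk0 _ hp.ne').map (algebraMap ℝ (H →L[ℂ] H))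
  · intro X hX
    obtain ⟨i, rfl⟩ := (List.mem_ofFn' _ _).1 hX
    rw [norm_smul, Complex.norm_real, Real.norm_of_nonneg hs0.le]
    nlinarith [hn i, norm_nonneg (T i)]
  · intro X hX Y hY
    obtain ⟨i, rfl⟩ := (List.mem_ofFn' _ _).1 hX
    obtain ⟨j, rfl⟩ := (List.mem_ofFn' _ _).1 hY
    exact ((hc i j).smul_left _).smul_right _

lemma closed_limit {X : ℕ → Fin k → (H →L[ℂ] H)} {T : Fin k → (H →L[ℂ] H)}
    (hX : ∀ m, memClosedPolydisk (X m))
    (h : ∀ i, Tendsto (fun m => X m i) atTop (𝓝 (T i))) : memClosedPolydisk T := by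
  have hc : ∀ i j, Commute (T i) (T j) := by
    intro i j
    refine tendsto_nhds_unique ((h i).mul (h j)) (((h j).mul (h i)).congr fun m => ?_)
    exact ((hX m).1 j i)
  have hn : ∀ i, ‖T i‖ ≤ 1 := fun i =>
    le_of_tendsto (h i).norm (Eventually.of_forall fun m => (hX m).2.1 i)
  have hd : ∀ s ∈ Set.Ioo (0 : ℝ) 1, (defect (fun i => (s : ℂ) • T i)).IsPositive := by
    intro s hs
    rw [← nonneg_iff_isPositive]
    refine ge_of_tendsto (defect_tendsto (X := fun m i => (s : ℂ) • X m i)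
      (fun i => (h i).const_smul _)) (Eventually.of_forall fun m => ?_)
    rw [nonneg_iff_isPositive]
    exact ((hX m).2.2 s hs).2.2.1
  refine ⟨hc, hn, fun r hr => ⟨fun i j => ((hc i j).smul_left _).smul_right _, fun i => ?_, hd r hr,
    defect_unit hc hn hd hr⟩⟩
  rw [norm_smul, Complex.norm_real, Real.norm_of_nonneg hr.1.le]
  nlinarith [hn i, norm_nonneg (T i), hr.1, hr.2]

lemma tendsto_clm_app {E : Type*} [NormedAddCommGroup E] [NormedSpace ℂ E] {F : ℕ → (E →L[ℂ] E)}
    {G : E →L[ℂ] E} (h : Tendsto F atTop (𝓝 G)) (x : E) :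
    Tendsto (fun m => F m x) atTop (𝓝 (G x)) :=
  ((ContinuousLinearMap.apply ℂ E x).continuous.tendsto G).comp h

lemma norm_le_dP (PA PB : ℝ → (L2 k H →L[ℂ] L2 k H)) {r : ℝ} (hr : r ∈ Set.Ico (0 : ℝ) 1) :
    (‖PA r - PB r‖₊ : ℝ≥0∞) ≤ dPfam PA PB :=
  le_iSup₂ (f := fun r (_ : r ∈ Set.Ico (0 : ℝ) 1) => (‖PA r - PB r‖₊ : ℝ≥0∞)) r hr

lemma norm_le_of_dP {PA PB : ℝ → (L2 k H →L[ℂ] L2 k H)} {r : ℝ} (hr : r ∈ Set.Ico (0 : ℝ) 1)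
    {ε : ℝ} (h : dPfam PA PB ≤ ENNReal.ofReal ε) (hε : 0 ≤ ε) : ‖PA r - PB r‖ ≤ ε := by
  have : ENNReal.ofReal ‖PA r - PB r‖ ≤ ENNReal.ofReal ε := by
    rw [ofReal_norm]; exact (norm_le_dP PA PB hr).trans h
  exact (ENNReal.ofReal_le_ofReal_iff hε).1 this

lemma dP_le {PA PB : ℝ → (L2 k H →L[ℂ] L2 k H)} {ε : ℝ}
    (h : ∀ r ∈ Set.Ico (0 : ℝ) 1, ‖PA r - PB r‖ ≤ ε) : dPfam PA PB ≤ ENNReal.ofReal ε := by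
  refine iSup₂_le fun r hr => ?_
  have := ENNReal.ofReal_le_ofReal (h r hr)
  rwa [ofReal_norm] at this

/-- `d_P` is a finite-valued metric on `D^k(H)⁻₀` and it is complete there. -/
theorem stmt_17 (hk : 1 ≤ k) :
    (∀ (A B : Fin k → (H →L[ℂ] H)) (PA PB : ℝ → (L2 k H →L[ℂ] L2 k H)),
      memD0 A → memD0 B →
      (∀ r ∈ Set.Ico (0 : ℝ) 1, IsPoissonKernel A r (PA r)) →
      (∀ r ∈ Set.Ico (0 : ℝ) 1, IsPoissonKernel B r (PB r)) →
      dPfam PA PB ≠ ⊤ ∧ (dPfam PA PB = 0 ↔ A = B) ∧ dPfam PA PB = dPfam PB PA) ∧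
    (∀ (A B C : Fin k → (H →L[ℂ] H)) (PA PB PC : ℝ → (L2 k H →L[ℂ] L2 k H)),
      memD0 A → memD0 B → memD0 C →
      (∀ r ∈ Set.Ico (0 : ℝ) 1, IsPoissonKernel A r (PA r)) →
      (∀ r ∈ Set.Ico (0 : ℝ) 1, IsPoissonKernel B r (PB r)) →
      (∀ r ∈ Set.Ico (0 : ℝ) 1, IsPoissonKernel C r (PC r)) →
      dPfam PA PC ≤ dPfam PA PB + dPfam PB PC) ∧
    (∀ (A : ℕ → Fin k → (H →L[ℂ] H)) (P : ℕ → ℝ → (L2 k H →L[ℂ] L2 k H)),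
      (∀ m, memD0 (A m)) →
      (∀ m, ∀ r ∈ Set.Ico (0 : ℝ) 1, IsPoissonKernel (A m) r (P m r)) →
      (∀ ε : ℝ≥0∞, 0 < ε → ∃ N, ∀ m ≥ N, ∀ n ≥ N, dPfam (P m) (P n) < ε) →
      ∃ (T : Fin k → (H →L[ℂ] H)) (PT : ℝ → (L2 k H →L[ℂ] L2 k H)),
        memD0 T ∧ (∀ r ∈ Set.Ico (0 : ℝ) 1, IsPoissonKernel T r (PT r)) ∧
        ∀ ε : ℝ≥0∞, 0 < ε → ∃ N, ∀ m ≥ N, dPfam (P m) PT < ε) := by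
  refine ⟨?_, ?_, ?_⟩
  · intro A B PA PB hA hB hPA hPB
    refine ⟨?_, ⟨?_, ?_⟩, ?_⟩
    · refine ne_top_of_le_ne_top ENNReal.ofReal_ne_top (dP_le
        (ε := ∏ i, (2 * ∑' n, ‖A i ^ n‖) + ∏ i, (2 * ∑' n, ‖B i ^ n‖)) fun r hr => ?_)
      exact (norm_sub_le _ _).trans
        (add_le_add (poisson_bound hA hr (hPA r hr)) (poisson_bound hB hr (hPB r hr)))
    · intro h0
      have hr : (1 / 2 : ℝ) ∈ Set.Ico (0 : ℝ) 1 := by constructor <;> norm_num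
      have h1 := norm_le_of_dP hr (ε := 0) (by rw [h0]; exact zero_le) le_rfl
      funext i
      have h2 := entry_diff hr.1 (hPA _ hr) (hPB _ hr) i
      have h3 : ‖A i - B i‖ ≤ 0 := by linarith
      exact sub_eq_zero.1 (norm_le_zero_iff.1 h3)
    · rintro rfl
      refine le_antisymm ?_ zero_le
      have := dP_le (PA := PA) (PB := PB) (ε := 0) (fun r hr => by
        rw [kernel_unique (hPA r hr) (hPB r hr), sub_self, norm_zero])
      simpa using this
    · have : ∀ r, ‖PA r - PB r‖₊ = ‖PB r - PA r‖₊ := fun r => NNReal.eq (norm_sub_rev _ _)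
      simp only [dPfam, this]
  · intro A B C PA PB PC _ _ _ _ _ _
    refine iSup₂_le fun r hr => ?_
    refine le_trans ?_ (add_le_add (norm_le_dP PA PB hr) (norm_le_dP PB PC hr))
    have : ‖PA r - PC r‖₊ ≤ ‖PA r - PB r‖₊ + ‖PB r - PC r‖₊ := by
      have := nnnorm_add_le (PA r - PB r) (PB r - PC r)
      rwa [sub_add_sub_cancel] at this
    exact_mod_cast this
  · intro A P hA hP hC
    have hC' : ∀ ε : ℝ, 0 < ε → ∃ N, ∀ m ≥ N, ∀ n ≥ N, ∀ r ∈ Set.Ico (0 : ℝ) 1,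
        ‖P m r - P n r‖ ≤ ε := by
      intro ε hε
      obtain ⟨N, hN⟩ := hC (ENNReal.ofReal ε) (ENNReal.ofReal_pos.2 hε)
      exact ⟨N, fun m hm n hn r hr => norm_le_of_dP hr (hN m hm n hn).le hε.le⟩
    have hr2 : (1 / 2 : ℝ) ∈ Set.Ico (0 : ℝ) 1 := by constructor <;> norm_num
    have hT : ∀ i, ∃ T, Tendsto (fun m => A m i) atTop (𝓝 T) := by
      intro i
      refine cauchySeq_tendsto_of_complete (Metric.cauchySeq_iff.2 fun ε hε => ?_)
      obtain ⟨N, hN⟩ := hC' (ε / 4) (by positivity)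
      refine ⟨N, fun m hm n hn => ?_⟩
      have h1 := hN m hm n hn _ hr2
      have h2 := entry_diff hr2.1 (hP m _ hr2) (hP n _ hr2) i
      rw [dist_eq_norm]; linarith
    choose T hT using hT
    have hPT : ∀ r : ℝ, ∃ Q, r ∈ Set.Ico (0 : ℝ) 1 → Tendsto (fun m => P m r) atTop (𝓝 Q) := by
      intro r
      by_cases hr : r ∈ Set.Ico (0 : ℝ) 1
      · have : CauchySeq fun m => P m r := by
          refine Metric.cauchySeq_iff.2 fun ε hε => ?_
          obtain ⟨N, hN⟩ := hC' (ε / 2) (by positivity)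
          refine ⟨N, fun m hm n hn => ?_⟩
          have h1 := hN m hm n hn _ hr
          rw [dist_eq_norm]; linarith
        obtain ⟨Q, hQ⟩ := cauchySeq_tendsto_of_complete this
        exact ⟨Q, fun _ => hQ⟩
      · exact ⟨0, fun h => absurd h hr⟩
    choose PT hPT using hPT
    have hconv : ∀ ε : ℝ, 0 < ε → ∃ N, ∀ m ≥ N, ∀ r ∈ Set.Ico (0 : ℝ) 1, ‖P m r - PT r‖ ≤ ε := by
      intro ε hε
      obtain ⟨N, hN⟩ := hC' ε hε
      refine ⟨N, fun m hm r hr => ?_⟩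
      refine le_of_tendsto ((hPT r hr).const_sub (P m r)).norm ?_
      filter_upwards [eventually_ge_atTop N] with n hn using hN m hm n hn r hr
    have hker : ∀ r ∈ Set.Ico (0 : ℝ) 1, IsPoissonKernel T r (PT r) := by
      intro r hr α β h l
      have t1 : Tendsto (fun m => inner (𝕜 := ℂ) (P m r (lp.single 2 β h)) (lp.single 2 α l : L2 k H)) atTop
          (𝓝 (inner (𝕜 := ℂ) (PT r (lp.single 2 β h)) (lp.single 2 α l : L2 k H))) :=
        (tendsto_clm_app (hPT r hr) _).inner tendsto_const_nhds
      have hprod : ∀ {k : ℕ} (f : ℕ → Fin k → (H →L[ℂ] H)) (g : Fin k → (H →L[ℂ] H)),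
          (∀ i, Tendsto (fun m => f m i) atTop (𝓝 (g i))) →
          Tendsto (fun m => (List.ofFn (f m)).prod) atTop (𝓝 (List.ofFn g).prod) := by
        intro k
        induction k with
        | zero => intro f g _; simp
        | succ k ih =>
          intro f g hfg
          simp only [List.ofFn_succ, List.prod_cons]
          exact (hfg 0).mul (ih _ _ fun i => hfg i.succ)
      have t2 := (hprod (fun m i => A m i ^ (β i - α i)) (fun i => T i ^ (β i - α i))
        (fun i => (hT i).pow _)).mul
        (hprod (fun m i => (adjoint (A m i)) ^ (α i - β i)) (fun i => (adjoint (T i)) ^ (α i - β i))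
        (fun i => ((hT i).star).pow _))
      have t3 := ((tendsto_clm_app t2 h).inner (𝕜 := ℂ)
        (tendsto_const_nhds (x := l))).const_mul
          (((r ^ (∑ i, ((α i - β i) + (β i - α i))) : ℝ) : ℂ))
      exact tendsto_nhds_unique t1 (t3.congr fun m => (hP m r hr α β h l).symm)
    have hcl : memClosedPolydisk T := closed_limit (fun m => (hA m).1) hT
    refine ⟨T, PT, ⟨hcl, ?_⟩, hker, ?_⟩
    · obtain ⟨N, hN⟩ := hconv 1 one_pos
      refine specRad_of_bound hcl.2.1 hker (M := ∏ i, (2 * ∑' n, ‖A N i ^ n‖) + 1) fun r hr => ?_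
      have h1 := poisson_bound (hA N) hr (hP N r hr)
      have h2 := hN N le_rfl r hr
      have h3 := norm_sub_norm_le (PT r) (P N r)
      rw [norm_sub_rev] at h3
      linarith
    · intro ε hε
      obtain ⟨δ, hδ0, hδ⟩ := ENNReal.lt_iff_exists_nnreal_btwn.1 hε
      have hδ0' : 0 < (δ : ℝ) := by exact_mod_cast hδ0
      obtain ⟨N, hN⟩ := hconv δ hδ0'
      refine ⟨N, fun m hm => lt_of_le_of_lt (dP_le (hN m hm)) ?_⟩
      rwa [ENNReal.ofReal_coe_nnreal]

end
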